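/- Let j ≥ 1 be an integer, m_j(r) := c′_j (1+r²)^{−j} with c′_j > 0 chosen so that ∫_ℝ m_j = 1, and m̂_j(s) := ∫_ℝ m_j(r) e^{−i r s} dr. For ξ ∈ ℝ³ ∖ {0} and θ ∈ ℝ define K_j(ξ, θ) := ∫₀^∞ t m̂_j(t|ξ|) e^{−i t θ} dt. Then, with z := θ − i|ξ|, K_j(ξ, θ) = −z^{−2} Σ_{p=0}^{j−1} a_p^{(j)} (|ξ|/(i z))^p, where the coefficients a_p^{(j)} are the positive numbers defined by the recursion: a₀^{(1)} := 1; N^{(j+1)} := Σ_{k=0}^{j−1} a_k^{(j)} / (2^k (k+1)); a₀^{(j+1)} := 1; and a_p^{(j+1)} := ((p+1) 2^{p−1} / N^{(j+1)}) Σ_{k=p−1}^{j−1} a_k^{(j)} / (2^k (k+1)) for 1 ≤ p ≤ j. -/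

import Mathlib

open MeasureTheory

noncomputable section

/-- The coefficients `a_p^{(j)}` of the kernels of the generalized Poisson equilibria,
defined by: `a₀^{(1)} = 1`; `N^{(j+1)} = Σ_{k=0}^{j-1} a_k^{(j)}/(2^k(k+1))`;
`a₀^{(j+1)} = 1`; `a_p^{(j+1)} = ((p+1)2^{p-1}/N^{(j+1)}) Σ_{k=p-1}^{j-1} a_k^{(j)}/(2^k(k+1))`
for `1 ≤ p ≤ j`. -/
def aCoef : ℕ → ℕ → ℝ
  | 0, _ => 0
  | 1, 0 => 1
  | 1, _ + 1 => 0
  | j + 2, 0 => 1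
  | j + 2, p + 1 =>
      ((p + 2 : ℝ) * 2 ^ p /
          ∑ k ∈ Finset.range (j + 1), aCoef (j + 1) k / (2 ^ k * (k + 1))) *
        ∑ k ∈ Finset.Icc p j, aCoef (j + 1) k / (2 ^ k * (k + 1))

/-- The reduced distribution `m_j(r) = c′_j (1+r²)^{-j}` of the generalized Poisson
equilibrium, normalized so that `∫ m_j = 1`. -/
def mj (j : ℕ) (r : ℝ) : ℝ :=
  (∫ s : ℝ, (((1 + s ^ 2) ^ j : ℝ))⁻¹)⁻¹ * (((1 + r ^ 2) ^ j : ℝ))⁻¹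

/-- The one-dimensional Fourier transform `m̂_j(s) = ∫ m_j(r) e^{-irs} dr`. -/
def mjHat (j : ℕ) (s : ℝ) : ℂ :=
  ∫ r : ℝ, (mj j r : ℂ) * Complex.exp (-(Complex.I * (r : ℂ) * (s : ℂ)))

/-- The polarization kernel `K_j(ξ,θ) = ∫₀^∞ t m̂_j(t|ξ|) e^{-itθ} dt`. -/
def Kj (j : ℕ) (ξ : EuclideanSpace ℝ (Fin 3)) (θ : ℝ) : ℂ :=
  ∫ t in Set.Ioi (0 : ℝ), (t : ℂ) * mjHat j (t * ‖ξ‖) * Complex.exp (-(Complex.I * (t : ℂ) * (θ : ℂ)))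

/-!
With `w = (1 + is)⁻¹` and `v = (1 - is)⁻¹` one has `w + v = 2wv` and `wv = (1 + s²)⁻¹`.
The Fourier transform of `e^{-|x|} Σ a_p |x|^p / (p+1)!` is the symmetric sum
`Σ a_p / (p+1) (w^{p+1} + v^{p+1})`, and the recursion for the `a_p` expresses that passing from
`j` to `j + 1` multiplies this sum by a constant times `wv`; hence it is a multiple of
`(1 + s²)^{-j}`. Fourier inversion, with the constant read off at the origin, identifies the
polynomial-exponential with `m̂_j`, and its Laplace transform is a sum of Gamma integrals.
-/

section Coefficients

open Finset

/-- The normalising constant `N^{(j+1)}` in the recursion from `a^{(j)}` to `a^{(j+1)}`. -/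
def aCoefNorm (j : ℕ) : ℝ :=
  ∑ k ∈ range j, aCoef j k / (2 ^ k * (k + 1))

lemma aCoef_succ_zero (j : ℕ) : aCoef (j + 1) 0 = 1 := by
  cases j <;> simp [aCoef]

lemma aCoef_succ_succ (j p : ℕ) :
    aCoef (j + 2) (p + 1) =
      (p + 2) * 2 ^ p / aCoefNorm (j + 1) *
        ∑ k ∈ Icc p j, aCoef (j + 1) k / (2 ^ k * (k + 1)) := by
  simp only [aCoef, aCoefNorm]

lemma sum_aCoef_div_pos {j : ℕ} {s : Finset ℕ} (hs : s.Nonempty)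
    (h : ∀ k ∈ s, 0 < aCoef j k) : 0 < ∑ k ∈ s, aCoef j k / (2 ^ k * (k + 1)) :=
  sum_pos (fun k hk => div_pos (h k hk) (by positivity)) hs

lemma aCoef_pos {j p : ℕ} (hp : p < j) : 0 < aCoef j p := by
  induction j generalizing p with
  | zero => omega
  | succ j ih =>
    rcases p with _ | p
    · simp only [aCoef_succ_zero, zero_lt_one]
    obtain ⟨j, rfl⟩ : ∃ i, j = i + 1 := ⟨j - 1, by omega⟩
    have norm_pos : 0 < aCoefNorm (j + 1) :=
      sum_aCoef_div_pos ⟨0, by simp⟩ fun k hk => ih (mem_range.1 hk)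
    have tail_pos : 0 < ∑ k ∈ Icc p j, aCoef (j + 1) k / (2 ^ k * (k + 1)) :=
      sum_aCoef_div_pos ⟨p, by grind⟩ fun k hk => ih (by grind)
    rw [aCoef_succ_succ]
    positivity

lemma aCoefNorm_succ_pos (j : ℕ) : 0 < aCoefNorm (j + 1) :=
  sum_aCoef_div_pos ⟨0, by simp⟩ fun _ hk => aCoef_pos (mem_range.1 hk)

lemma aCoefNorm_mul_sum_aCoef_succ (j : ℕ) (S : ℕ → ℂ) :
    aCoefNorm (j + 1) * ∑ p ∈ range (j + 2), (aCoef (j + 2) p : ℂ) / (p + 1) * S p =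
      ∑ k ∈ range (j + 1), (aCoef (j + 1) k : ℂ) / (2 ^ k * (k + 1)) *
        (S 0 + ∑ m ∈ range (k + 1), 2 ^ m * S (m + 1)) := by
  have hN : (aCoefNorm (j + 1) : ℂ) ≠ 0 := by exact_mod_cast (aCoefNorm_succ_pos j).ne'
  have recursion (m : ℕ) :
      aCoefNorm (j + 1) * ((aCoef (j + 2) (m + 1) : ℂ) / ((m + 1 : ℕ) + 1) * S (m + 1)) =
        ∑ k ∈ Icc m j, (aCoef (j + 1) k : ℂ) / (2 ^ k * (k + 1)) * (2 ^ m * S (m + 1)) := by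
    have hm' : (m : ℂ) + 1 + 1 ≠ 0 := by norm_cast
    rw [aCoef_succ_succ, ← sum_mul]
    push_cast
    field_simp
    ring
  have swap : ∑ m ∈ range (j + 1), ∑ k ∈ Icc m j,
        (aCoef (j + 1) k : ℂ) / (2 ^ k * (k + 1)) * (2 ^ m * S (m + 1)) =
      ∑ k ∈ range (j + 1), ∑ m ∈ range (k + 1),
        (aCoef (j + 1) k : ℂ) / (2 ^ k * (k + 1)) * (2 ^ m * S (m + 1)) :=
    sum_comm' fun m k => by simp only [mem_range, mem_Icc]; omega
  rw [sum_range_succ', mul_add, mul_sum, sum_congr rfl fun m _ => recursion m, swap,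
    aCoef_succ_zero]
  simp only [mul_add, mul_sum, sum_add_distrib, ← sum_mul, aCoefNorm]
  push_cast
  ring

lemma two_pow_mul_mul_pow_add_pow {R : Type*} [CommRing R] {w v : R}
    (h : w + v = 2 * (w * v)) (n : ℕ) :
    2 ^ n * (w * v * (w ^ n + v ^ n)) =
      w + v + ∑ m ∈ range n, 2 ^ m * (w ^ (m + 2) + v ^ (m + 2)) := by
  induction n with
  | zero => simp only [range_zero, sum_empty]; linear_combination -h
  | succ n ih =>
    rw [sum_range_succ, ← add_assoc, ← ih]
    linear_combination (-(2 ^ n * (w ^ (n + 1) + v ^ (n + 1)))) * h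

lemma exists_sum_aCoef_mul_pow_add_pow_eq (j : ℕ) : ∃ C : ℂ, C ≠ 0 ∧
    ∀ w v : ℂ, w + v = 2 * (w * v) →
      ∑ k ∈ range (j + 1), (aCoef (j + 1) k : ℂ) / (k + 1) * (w ^ (k + 1) + v ^ (k + 1)) =
        C * (w * v) ^ (j + 1) := by
  induction j with
  | zero => exact ⟨2, two_ne_zero, fun w v h => by simp [aCoef, h]⟩
  | succ j ih =>
    obtain ⟨C, hC, hsum⟩ := ih
    have hN : (aCoefNorm (j + 1) : ℂ) ≠ 0 := by exact_mod_cast (aCoefNorm_succ_pos j).ne'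
    refine ⟨2 * C / aCoefNorm (j + 1), div_ne_zero (mul_ne_zero two_ne_zero hC) hN,
      fun w v h => mul_left_cancel₀ hN ?_⟩
    rw [aCoefNorm_mul_sum_aCoef_succ j fun p => w ^ (p + 1) + v ^ (p + 1)]
    calc ∑ k ∈ range (j + 1), (aCoef (j + 1) k : ℂ) / (2 ^ k * (k + 1)) *
          (w ^ (0 + 1) + v ^ (0 + 1) +
            ∑ m ∈ range (k + 1), 2 ^ m * (w ^ (m + 1 + 1) + v ^ (m + 1 + 1)))
        = ∑ k ∈ range (j + 1), 2 * (w * v) *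
            ((aCoef (j + 1) k : ℂ) / (k + 1) * (w ^ (k + 1) + v ^ (k + 1))) := by
          refine sum_congr rfl fun k _ => ?_
          have hk : (k : ℂ) + 1 ≠ 0 := by norm_cast
          rw [zero_add, pow_one, pow_one, ← two_pow_mul_mul_pow_add_pow h (k + 1)]
          field_simp
          ring
      _ = 2 * (w * v) * (C * (w * v) ^ (j + 1)) := by rw [← mul_sum, hsum w v h]
      _ = aCoefNorm (j + 1) * (2 * C / aCoefNorm (j + 1) * (w * v) ^ (j + 1 + 1)) := by
          field_simp
          ring

end Coefficients

section LaplaceIntegral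

open Set Complex

lemma integrableOn_pow_mul_cexp_neg_mul_Ioi {r : ℂ} (hr : 0 < r.re) (n : ℕ) :
    IntegrableOn (fun t : ℝ => (t : ℂ) ^ n * exp (-(r * t))) (Ioi 0) := by
  have dominating : IntegrableOn (fun t : ℝ => t ^ n * Real.exp (-(r.re * t))) (Ioi 0) := by
    simpa using integrableOn_rpow_mul_exp_neg_mul_rpow (s := n) (p := 1) (b := r.re)
      (by linarith [n.cast_nonneg (α := ℝ)]) one_pos hr
  refine Integrable.mono' dominating (by fun_prop) ?_
  filter_upwards [ae_restrict_mem measurableSet_Ioi] with t ht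
  simp [norm_exp, abs_of_pos (mem_Ioi.1 ht)]

lemma hasDerivAt_pow_succ_mul_cexp_neg_mul (r : ℂ) (n : ℕ) (t : ℝ) :
    HasDerivAt (fun t : ℝ => (t : ℂ) ^ (n + 1) * exp (-(r * t)))
      ((n + 1) * ((t : ℂ) ^ n * exp (-(r * t))) - r * ((t : ℂ) ^ (n + 1) * exp (-(r * t)))) t := by
  have h := (((hasDerivAt_pow (n + 1) (t : ℂ)).mul
    ((hasDerivAt_id (t : ℂ)).const_mul r).neg.cexp)).comp_ofReal
  refine h.congr_deriv ?_
  push_cast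
  simp only [mul_one, id, Pi.neg_apply]
  ring

lemma integral_pow_mul_cexp_neg_mul_Ioi {r : ℂ} (hr : 0 < r.re) (n : ℕ) :
    ∫ t in Ioi (0 : ℝ), (t : ℂ) ^ n * exp (-(r * t)) = n.factorial / r ^ (n + 1) := by
  have hr0 : r ≠ 0 := by rintro rfl; simp at hr
  induction n with
  | zero => simpa using integral_exp_mul_complex_Ioi (a := -r) (by simpa using hr) 0
  | succ n ih =>
    have int_n := (integrableOn_pow_mul_cexp_neg_mul_Ioi hr n).const_mul ((n : ℂ) + 1)
    have int_succ := integrableOn_pow_mul_cexp_neg_mul_Ioi hr (n + 1)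
    have hderiv := fun (t : ℝ) (_ : t ∈ Ici 0) => hasDerivAt_pow_succ_mul_cexp_neg_mul r n t
    have parts := integral_Ioi_of_hasDerivAt_of_tendsto' hderiv (int_n.sub (int_succ.const_mul r))
      (tendsto_zero_of_hasDerivAt_of_integrableOn_Ioi
        (fun t ht => hderiv t (Ioi_subset_Ici_self ht))
        (int_n.sub (int_succ.const_mul r)) int_succ)
    rw [integral_sub int_n (int_succ.const_mul r), integral_const_mul, integral_const_mul, ih,
      ofReal_zero, zero_pow n.succ_ne_zero, zero_mul, sub_zero] at parts
    rw [Nat.factorial_succ]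
    push_cast
    field_simp at parts ⊢
    linear_combination -parts

end LaplaceIntegral

section AngularFourier

open Set Complex
open scoped FourierTransform

/-- The Fourier transform in angular frequency, `f̂(s) = ∫ f(r) e^{-irs} dr`, the convention in
which `m̂_j` is the transform of `m_j`; Mathlib's `𝓕` has `e^{-2πirs}` instead. -/
def angularFourier (f : ℝ → ℂ) (s : ℝ) : ℂ :=
  ∫ r : ℝ, f r * exp (-(I * r * s))

lemma fourier_eq_angularFourier (f : ℝ → ℂ) (w : ℝ) :
    𝓕 f w = angularFourier f (2 * Real.pi * w) := by
  rw [Real.fourier_real_eq_integral_exp_smul, angularFourier]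
  refine integral_congr_ae (.of_forall fun r => ?_)
  simp only [smul_eq_mul, mul_comm (f r)]
  congr 2
  push_cast
  ring

lemma angularFourier_const_mul (c : ℂ) (f : ℝ → ℂ) (s : ℝ) :
    angularFourier (fun r => c * f r) s = c * angularFourier f s := by
  simp only [angularFourier, mul_assoc, integral_const_mul]

lemma integrable_mul_cexp {f : ℝ → ℂ} (hf : Integrable f) (s : ℝ) :
    Integrable fun r : ℝ => f r * exp (-(I * r * s)) :=
  hf.mul_bdd (c := 1) (by fun_prop) (.of_forall fun r => by simp [norm_exp])

lemma angularFourier_finsetSum {ι : Type*} (t : Finset ι) {f : ι → ℝ → ℂ}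
    (hf : ∀ i ∈ t, Integrable (f i)) (s : ℝ) :
    angularFourier (fun r => ∑ i ∈ t, f i r) s = ∑ i ∈ t, angularFourier (f i) s := by
  simp only [angularFourier, Finset.sum_mul]
  exact integral_finsetSum t fun i hi => integrable_mul_cexp (hf i hi) s

lemma angularFourier_comp_div_two_pi (f : ℝ → ℂ) (s : ℝ) :
    angularFourier (fun r => f (r / (2 * Real.pi))) s = 2 * Real.pi * 𝓕 f s := by
  have scaling := Measure.integral_comp_div
    (fun w : ℝ => f w * exp (-(I * (2 * Real.pi * w : ℝ) * s))) (2 * Real.pi)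
  simp only [mul_div_cancel₀ _ Real.two_pi_pos.ne', abs_of_pos Real.two_pi_pos,
    real_smul] at scaling
  rw [fourier_eq_angularFourier, angularFourier, scaling, angularFourier]
  push_cast
  refine congrArg _ (integral_congr_ae (.of_forall fun w => ?_))
  ring_nf

lemma angularFourier_angularFourier {f : ℝ → ℂ} (hf : Integrable f)
    (hf' : Integrable (angularFourier f)) {s : ℝ} (hs : ContinuousAt f (-s)) :
    angularFourier (angularFourier f) s = 2 * Real.pi * f (-s) := by
  have fourier_int : Integrable (𝓕 f) := by
    rw [funext (fourier_eq_angularFourier f)]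
    exact hf'.comp_mul_left' Real.two_pi_pos.ne'
  have rescaled : angularFourier f = fun s => 𝓕 f (s / (2 * Real.pi)) := by
    funext s
    rw [fourier_eq_angularFourier, mul_div_cancel₀ _ Real.two_pi_pos.ne']
  rw [rescaled, angularFourier_comp_div_two_pi, ← hf.fourierInv_fourier_eq fourier_int hs,
    Real.fourierInv_eq_fourier_neg, neg_neg]

lemma integrable_comp_abs {E : Type*} [NormedAddCommGroup E] {g : ℝ → E}
    (hg : IntegrableOn g (Ioi 0)) : Integrable fun x => g |x| := by
  have right : IntegrableOn (fun x => g |x|) (Ioi 0) :=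
    hg.congr_fun (fun x hx => by rw [abs_of_pos (mem_Ioi.1 hx)]) measurableSet_Ioi
  have left : IntegrableOn (fun x => g |x|) (Iio 0) := by
    have reflected : IntegrableOn (fun x => g |x|) (Ioi (-(0 : ℝ))) := by rwa [neg_zero]
    simpa only [abs_neg] using reflected.comp_neg_Iio
  rw [← integrableOn_univ, ← Iic_union_Ioi (a := (0 : ℝ))]
  exact (integrableOn_Iic_iff_integrableOn_Iio (by simp) |>.2 left).union right

lemma angularFourier_comp_abs {g : ℝ → ℂ} (hg : IntegrableOn g (Ioi 0)) (s : ℝ) :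
    angularFourier (fun r => g |r|) s =
      (∫ r in Ioi (0 : ℝ), g r * exp (-(I * r * s))) +
        ∫ r in Ioi (0 : ℝ), g r * exp (I * r * s) := by
  have int := integrable_mul_cexp (integrable_comp_abs hg) s
  have right : ∫ r in Ioi (0 : ℝ), g |r| * exp (-(I * r * s)) =
      ∫ r in Ioi (0 : ℝ), g r * exp (-(I * r * s)) :=
    setIntegral_congr_fun measurableSet_Ioi fun r hr => by
      simp only [abs_of_pos (mem_Ioi.1 hr)]
  have left : ∫ r in Iic (0 : ℝ), g |r| * exp (-(I * r * s)) =
      ∫ r in Ioi (0 : ℝ), g r * exp (I * r * s) := by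
    rw [← neg_zero, ← integral_comp_neg_Ioi, neg_zero]
    refine setIntegral_congr_fun measurableSet_Ioi fun r hr => ?_
    simp only [abs_neg, abs_of_pos (mem_Ioi.1 hr), ofReal_neg, mul_neg, neg_mul, neg_neg]
  rw [angularFourier, ← intervalIntegral.integral_Iic_add_Ioi int.integrableOn int.integrableOn,
    left, right, add_comm]

lemma integrable_abs_pow_mul_exp_neg_mul_abs {b : ℝ} (hb : 0 < b) (n : ℕ) :
    Integrable fun x : ℝ => ((|x| : ℝ) : ℂ) ^ n * exp (-(b * (|x| : ℝ))) :=
  integrable_comp_abs (integrableOn_pow_mul_cexp_neg_mul_Ioi (r := b) (by simpa using hb) n)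

lemma angularFourier_abs_pow_mul_exp_neg_mul_abs {b : ℝ} (hb : 0 < b) (n : ℕ) (s : ℝ) :
    angularFourier (fun x => ((|x| : ℝ) : ℂ) ^ n * exp (-(b * (|x| : ℝ)))) s =
      n.factorial * ((b + I * s)⁻¹ ^ (n + 1) + (b - I * s)⁻¹ ^ (n + 1)) := by
  rw [angularFourier_comp_abs
    (integrableOn_pow_mul_cexp_neg_mul_Ioi (r := b) (by simpa using hb) n)]
  have pos : 0 < (b + I * s : ℂ).re := by simpa using hb
  have pos' : 0 < (b - I * s : ℂ).re := by simpa using hb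
  rw [inv_pow, inv_pow, mul_add, ← div_eq_mul_inv, ← div_eq_mul_inv,
    ← integral_pow_mul_cexp_neg_mul_Ioi pos, ← integral_pow_mul_cexp_neg_mul_Ioi pos']
  simp only [mul_assoc, ← exp_add]
  congr! 5 <;> ring_nf

end AngularFourier

section PoissonProfile

open Complex

/-- The function `e^{-|s|} Σ_{p<j} a_p^{(j)} |s|^p / (p+1)!`, the closed form of `m̂_j(s)`. -/
def poissonProfile (j : ℕ) (s : ℝ) : ℂ :=
  ∑ p ∈ Finset.range j,
    (aCoef j p / (p + 1).factorial : ℂ) * (((|s| : ℝ) : ℂ) ^ p * exp (-(|s| : ℝ)))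

lemma poissonProfile_succ_zero (j : ℕ) : poissonProfile (j + 1) 0 = 1 := by
  simp [poissonProfile, Finset.sum_range_succ', aCoef_succ_zero]

lemma poissonProfile_neg (j : ℕ) (s : ℝ) : poissonProfile j (-s) = poissonProfile j s := by
  simp only [poissonProfile, abs_neg]

lemma continuous_poissonProfile (j : ℕ) : Continuous (poissonProfile j) := by
  unfold poissonProfile
  fun_prop

lemma integrable_poissonProfile_term (j p : ℕ) :
    Integrable fun s : ℝ =>
      (aCoef j p / (p + 1).factorial : ℂ) * (((|s| : ℝ) : ℂ) ^ p * exp (-(|s| : ℝ))) := by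
  simpa using (integrable_abs_pow_mul_exp_neg_mul_abs one_pos p).const_mul
    (aCoef j p / (p + 1).factorial : ℂ)

lemma integrable_poissonProfile (j : ℕ) : Integrable (poissonProfile j) :=
  integrable_finsetSum _ fun p _ => integrable_poissonProfile_term j p

lemma angularFourier_poissonProfile (j : ℕ) (s : ℝ) :
    angularFourier (poissonProfile j) s = ∑ p ∈ Finset.range j,
      (aCoef j p : ℂ) / (p + 1) * ((1 + I * s)⁻¹ ^ (p + 1) + (1 - I * s)⁻¹ ^ (p + 1)) := by
  unfold poissonProfile
  rw [angularFourier_finsetSum _ fun p _ => integrable_poissonProfile_term j p]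
  refine Finset.sum_congr rfl fun p _ => ?_
  have basic := angularFourier_abs_pow_mul_exp_neg_mul_abs one_pos p s
  simp only [ofReal_one, one_mul] at basic
  have hp : (p.factorial : ℂ) ≠ 0 := by exact_mod_cast p.factorial_ne_zero
  rw [angularFourier_const_mul, basic, Nat.factorial_succ]
  push_cast
  field_simp

lemma exists_angularFourier_poissonProfile_eq (j : ℕ) : ∃ C : ℂ, C ≠ 0 ∧
    angularFourier (poissonProfile (j + 1)) =
      fun s : ℝ => C * ((((1 + s ^ 2) ^ (j + 1))⁻¹ : ℝ) : ℂ) := by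
  obtain ⟨C, hC, hsum⟩ := exists_sum_aCoef_mul_pow_add_pow_eq j
  refine ⟨C, hC, funext fun s => ?_⟩
  have hw : (1 + I * s : ℂ) ≠ 0 := fun h => by simpa using congrArg re h
  have hv : (1 - I * s : ℂ) ≠ 0 := fun h => by simpa using congrArg re h
  have hwv : (1 + I * s : ℂ) * (1 - I * s) = 1 + s ^ 2 := by
    linear_combination (-(s : ℂ) ^ 2) * I_sq
  rw [angularFourier_poissonProfile, hsum _ _ (by field_simp; ring), ← mul_inv, hwv, inv_pow]
  push_cast
  rfl

lemma integrable_inv_one_add_sq_pow_succ (n : ℕ) :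
    Integrable fun r : ℝ => ((1 + r ^ 2) ^ (n + 1))⁻¹ := by
  refine integrable_inv_one_add_sq.mono' (by fun_prop) (.of_forall fun r => ?_)
  have one_le : (1 : ℝ) ≤ 1 + r ^ 2 := le_add_of_nonneg_right (sq_nonneg r)
  rw [Real.norm_of_nonneg (by positivity)]
  gcongr
  exact le_self_pow₀ one_le n.succ_ne_zero

lemma mjHat_eq_angularFourier (j : ℕ) (s : ℝ) :
    mjHat j s = (∫ r : ℝ, (((1 + r ^ 2) ^ j : ℝ))⁻¹ : ℝ)⁻¹ *
      angularFourier (fun r : ℝ => ((((1 + r ^ 2) ^ j)⁻¹ : ℝ) : ℂ)) s := by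
  rw [← angularFourier_const_mul]
  simp only [mjHat, mj, angularFourier, ofReal_mul, ofReal_inv]

lemma mjHat_succ (j : ℕ) (s : ℝ) : mjHat (j + 1) s = poissonProfile (j + 1) s := by
  obtain ⟨C, hC, transform⟩ := exists_angularFourier_poissonProfile_eq j
  set M : ℝ → ℂ := fun r => ((((1 + r ^ 2) ^ (j + 1))⁻¹ : ℝ) : ℂ)
  have inversion (s : ℝ) : C * angularFourier M s = 2 * Real.pi * poissonProfile (j + 1) s := by
    rw [← angularFourier_const_mul, ← transform, ← poissonProfile_neg]
    refine angularFourier_angularFourier (integrable_poissonProfile _) ?_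
      (continuous_poissonProfile _).continuousAt
    rw [transform]
    exact (integrable_inv_one_add_sq_pow_succ j).ofReal.const_mul C
  have mass : C * (∫ r : ℝ, (((1 + r ^ 2) ^ (j + 1) : ℝ))⁻¹ : ℝ) = 2 * Real.pi := by
    have at_zero := inversion 0
    rw [poissonProfile_succ_zero, mul_one] at at_zero
    rw [← at_zero, ← integral_complex_ofReal]
    simp [angularFourier, M]
  have hpi : (2 * Real.pi : ℂ) ≠ 0 := by exact_mod_cast Real.two_pi_pos.ne'
  have hmass := right_ne_zero_of_mul (mass ▸ hpi)
  rw [mjHat_eq_angularFourier, ofReal_inv, inv_mul_eq_iff_eq_mul₀ hmass]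
  refine mul_left_cancel₀ hC ?_
  rw [inversion, ← mass, mul_assoc]

lemma mul_poissonProfile_mul_cexp (j : ℕ) {x t : ℝ} (hx : 0 ≤ x) (ht : 0 ≤ t) (θ : ℂ) :
    (t : ℂ) * poissonProfile j (t * x) * exp (-(I * t * θ)) =
      ∑ p ∈ Finset.range j, (aCoef j p / (p + 1).factorial * x ^ p : ℂ) *
        ((t : ℂ) ^ (p + 1) * exp (-((x + I * θ) * t))) := by
  have exp_split : exp (-((x + I * θ) * t)) = exp (-(t * x)) * exp (-(I * t * θ)) := by
    rw [← exp_add]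
    ring_nf
  rw [poissonProfile, abs_of_nonneg (mul_nonneg ht hx), exp_split, Finset.mul_sum, Finset.sum_mul]
  refine Finset.sum_congr rfl fun p _ => ?_
  push_cast
  ring

lemma integral_mul_poissonProfile_mul_cexp_Ioi (j : ℕ) {x : ℝ} (hx : 0 ≤ x) {θ : ℂ}
    (hθ : θ.im < x) :
    ∫ t in Set.Ioi (0 : ℝ), (t : ℂ) * poissonProfile j (t * x) * exp (-(I * t * θ)) =
      ((x + I * θ) ^ 2)⁻¹ * ∑ p ∈ Finset.range j, (aCoef j p : ℂ) * (x / (x + I * θ)) ^ p := by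
  have hre : 0 < (x + I * θ : ℂ).re := by simpa using hθ
  rw [setIntegral_congr_fun measurableSet_Ioi fun t ht =>
      mul_poissonProfile_mul_cexp j hx (Set.mem_Ioi.1 ht).le θ,
    integral_finsetSum _ fun p _ =>
      (integrableOn_pow_mul_cexp_neg_mul_Ioi hre (p + 1)).const_mul _, Finset.mul_sum]
  refine Finset.sum_congr rfl fun p _ => ?_
  have hp : ((p + 1).factorial : ℂ) ≠ 0 := by exact_mod_cast (p + 1).factorial_ne_zero
  rw [integral_const_mul, integral_pow_mul_cexp_neg_mul_Ioi hre, div_pow]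
  field_simp
  ring

end PoissonProfile

theorem kernel_formula_generalized_poisson_general {j : ℕ} (hj : 1 ≤ j) {x : ℝ} (hx : 0 ≤ x)
    {θ : ℂ} (hθ : θ.im < x) :
    ∫ t in Set.Ioi (0 : ℝ), (t : ℂ) * mjHat j (t * x) * Complex.exp (-(Complex.I * t * θ)) =
      -((θ - Complex.I * x) ^ 2)⁻¹ * ∑ p ∈ Finset.range j, (aCoef j p : ℂ) *
        (x / (Complex.I * (θ - Complex.I * x))) ^ p := by
  obtain ⟨j, rfl⟩ := Nat.exists_eq_add_of_le' hj
  have rotate : Complex.I * (θ - Complex.I * x) = x + Complex.I * θ := by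
    linear_combination (-(x : ℂ)) * Complex.I_sq
  have rotate_sq : -((θ - Complex.I * x) ^ 2)⁻¹ = ((x + Complex.I * θ) ^ 2)⁻¹ := by
    rw [← rotate, mul_pow, Complex.I_sq, neg_one_mul, inv_neg]
  simp only [mjHat_succ]
  rw [rotate, rotate_sq, integral_mul_poissonProfile_mul_cexp_Ioi (j + 1) hx hθ]

/-- The explicit formula `K_j(ξ,θ) = -z^{-2} Σ_{p=0}^{j-1} a_p^{(j)} (|ξ|/(iz))^p` with
`z = θ - i|ξ|` for the kernels of the generalized Poisson equilibria. -/
theorem kernel_formula_generalized_poisson (j : ℕ) (hj : 1 ≤ j)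
    (ξ : EuclideanSpace ℝ (Fin 3)) (hξ : ξ ≠ 0) (θ : ℝ) :
    Kj j ξ θ =
      -(((θ : ℂ) - Complex.I * (‖ξ‖ : ℂ)) ^ 2)⁻¹ *
        ∑ p ∈ Finset.range j, (aCoef j p : ℂ) *
          ((‖ξ‖ : ℂ) / (Complex.I * ((θ : ℂ) - Complex.I * (‖ξ‖ : ℂ)))) ^ p :=
  kernel_formula_generalized_poisson_general hj (norm_nonneg ξ) (by simpa using hξ)
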